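/- Let λ ∈ Λ* = { λ ∈ ℤ^{k+1} ∪ (½+ℤ)^{k+1} : λ₁ > λ₂ > ... > λ_k > |λ_{k+1}| > 0 }. Then there exist exactly k+1 pairs (σ,ν) with σ = (n₁,...,n_k), n₁ ≥ ... ≥ n_{k-1} ≥ |n_k|, all n_i in ℤ or all in ½+ℤ, ν ≥ 0, such that (n₁+k-1, n₂+k-2, ..., n_{k-1}+1, n_k, ν) lies in the orbit of λ under the group of permutations of ℝ^{k+1} combined with an even number of sign changes; they are given by ν_j = λ_j (1 ≤ j ≤ k) and ν_{k+1} = |λ_{k+1}|, with σ_j determined by deleting λ_j and shifting as in Theorem 3(i). -/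

import Mathlib

/-!
Write `A i = |λ i|`; membership in `Λ*` makes `A` positive and strictly decreasing, with `λ i > 0`
except possibly at the last index.

If the tuple `τ` of `(σ, ν)` is `τ i = e i * λ (g i)`, dominance of `σ` makes `|τ i| = A (g i)`
strictly decreasing over the first `k` indices, so `g` is strictly increasing there. Hence `g` is
determined by `j = g (last)`: on the first `k` indices it is `j.succAbove` (`delPerm`). The first
`k - 1` entries of `τ` and of `λ ∘ g` are positive, so those signs are `1`; the sign at `ν` is the
sign of `λ j` because `ν ≥ 0`, and the remaining sign equals it because the product of all signs is
`1` (`delSign`). The resulting tuple is exactly that of `(σ_j, ν_j)` (`tupD_sigmaD`).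

Conversely, these tuples lie in the orbit by construction, and `σ_j` is dominant because entries
of `A` differ by integers, so that a strict inequality between them leaves a gap of at least `1`.
The pairs are distinct since `ν_j = A j`.
-/

/-- μ lies in the orbit of λ under the type D Weyl group: permutations of the
coordinates combined with an even number of sign changes. -/
def evenSignedPermOrbit (n : ℕ) (lam mu : Fin n → ℝ) : Prop :=
  ∃ (g : Equiv.Perm (Fin n)) (e : Fin n → ℝ),
    (∀ i, e i = 1 ∨ e i = -1) ∧ (∏ i, e i) = 1 ∧ ∀ i, mu i = e i * lam (g i)

/-- λ ∈ Λ* : λ₁ > ... > λ_k > |λ_{k+1}| > 0, all coordinates in ℤ or all in ½+ℤ. -/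
def memLamStarD (k : ℕ) (hk : 2 ≤ k) (lam : Fin (k + 1) → ℝ) : Prop :=
  (∀ i : Fin (k + 1), ∀ h : i.val + 1 < k, lam i > lam ⟨i.val + 1, by omega⟩) ∧
  lam ⟨k - 1, by omega⟩ > |lam ⟨k, by omega⟩| ∧
  |lam ⟨k, by omega⟩| > 0 ∧
  ((∀ i, ∃ m : ℤ, lam i = m) ∨ (∀ i, ∃ m : ℤ, lam i = m + 1/2))

/-- σ = (n₁,...,n_k) is a dominant Spin(2k) weight: n₁ ≥ ... ≥ n_{k-1} ≥ |n_k|. -/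
def domM (k : ℕ) (hk : 2 ≤ k) (σ : Fin k → ℝ) : Prop :=
  (∀ i : Fin k, ∀ h : i.val + 2 < k, σ i ≥ σ ⟨i.val + 1, by omega⟩) ∧
  σ ⟨k - 2, by omega⟩ ≥ |σ ⟨k - 1, by omega⟩|

/-- The tuple (n₁+k-1, n₂+k-2, ..., n_{k-1}+1, n_k, ν) attached to (σ,ν). -/
noncomputable def tupD (k : ℕ) (σ : Fin k → ℝ) (ν : ℝ) : Fin (k + 1) → ℝ := fun i =>
  if h : i.val < k then σ ⟨i.val, h⟩ + (k : ℝ) - 1 - i.val else ν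

/-- The parameter σ_j of Theorem 3(i) (j is 0-indexed in Fin (k+1); for j ≤ k-1 it
is obtained from λ by deleting λ_{j+1} and shifting, with last coordinate λ_{k+1};
for j = k it is (λ₁-k+1,...,λ_{k-1}-1, sgn(λ_{k+1})·λ_k)). -/
noncomputable def sigmaD (k : ℕ) (hk : 2 ≤ k) (lam : Fin (k + 1) → ℝ)
    (j : Fin (k + 1)) : Fin k → ℝ :=
  if j.val < k then fun i =>
    if i.val = k - 1 then lam ⟨k, by omega⟩
    else if i.val < j.val then lam ⟨i.val, by omega⟩ - k + i.val + 1
    else lam ⟨i.val + 1, by have := i.isLt; omega⟩ - k + i.val + 1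
  else fun i =>
    if i.val = k - 1 then
      (if lam ⟨k, by omega⟩ > 0 then lam ⟨k - 1, by omega⟩ else -lam ⟨k - 1, by omega⟩)
    else lam ⟨i.val, by omega⟩ - k + i.val + 1

/-- The parameter ν_j of Theorem 3(i): ν_j = λ_j for j ≤ k, ν_{k+1} = |λ_{k+1}|. -/
noncomputable def nuD (k : ℕ) (hk : 2 ≤ k) (lam : Fin (k + 1) → ℝ)
    (j : Fin (k + 1)) : ℝ :=
  if j.val < k then lam j else |lam ⟨k, by omega⟩|

/-! ### Permutation and signs attached to a deleted index -/

/-- The permutation of `Fin (m + 3)` sending the last index to `j` and the others, in increasing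
order, to the complement of `j`. -/
def delPerm (m : ℕ) (j : Fin (m + 3)) : Equiv.Perm (Fin (m + 3)) :=
  finSuccEquivLast.trans (finSuccEquiv' j).symm

/-- The signs attached to the index `j`: the sign of `λ j` on the last two positions, `1` on all
others. -/
noncomputable def delSign (m : ℕ) (lam : Fin (m + 3) → ℝ) (j i : Fin (m + 3)) : ℝ :=
  if i.val < m + 1 then 1 else if 0 < lam j then 1 else -1

lemma delPerm_last (m : ℕ) (j : Fin (m + 3)) : delPerm m j (Fin.last _) = j := by
  simp [delPerm]

lemma delPerm_castSucc (m : ℕ) (j : Fin (m + 3)) (i : Fin (m + 2)) :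
    delPerm m j i.castSucc = j.succAbove i := by
  simp [delPerm]

lemma delPerm_strictMono (m : ℕ) (j : Fin (m + 3)) :
    StrictMono fun i : Fin (m + 2) => delPerm m j i.castSucc := by
  simp only [delPerm_castSucc]
  exact Fin.strictMono_succAbove j

/-- A permutation that is strictly increasing off the last index is determined by its value
there. -/
lemma eq_delPerm (m : ℕ) (g : Equiv.Perm (Fin (m + 3)))
    (hg : StrictMono fun i : Fin (m + 2) => g i.castSucc) : g = delPerm m (g (Fin.last _)) := by
  have h : (fun i : Fin (m + 2) => g i.castSucc) = (g (Fin.last _)).succAbove := by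
    refine (StrictMono.range_inj hg (Fin.strictMono_succAbove _)).1 ?_
    rw [Fin.range_succAbove]
    ext x
    simp only [Set.mem_range, Set.mem_compl_iff, Set.mem_singleton_iff]
    constructor
    · rintro ⟨i, rfl⟩ h
      exact (Fin.castSucc_lt_last i).ne (g.injective h)
    · intro hx
      have hne : g.symm x ≠ Fin.last _ := fun h => hx (by rw [← h]; simp)
      exact ⟨(g.symm x).castPred hne, by simp⟩
  ext1 i
  refine Fin.lastCases ?_ (fun i => ?_) i
  · rw [delPerm_last]
  · rw [delPerm_castSucc, ← h]

lemma delPerm_castSucc_lt (m : ℕ) (j : Fin (m + 3)) (i : Fin (m + 3)) (hi : i.val < m + 1) :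
    (delPerm m j i).val < m + 2 := by
  have := delPerm_castSucc m j ⟨i.val, by omega⟩
  rw [show (⟨i.val, by omega⟩ : Fin (m + 2)).castSucc = i from rfl] at this
  rw [this, Fin.succAbove]
  split_ifs <;> simp <;> omega

lemma delSign_eq_or (m : ℕ) (lam : Fin (m + 3) → ℝ) (j i : Fin (m + 3)) :
    delSign m lam j i = 1 ∨ delSign m lam j i = -1 := by
  unfold delSign; split_ifs <;> simp

lemma prod_delSign (m : ℕ) (lam : Fin (m + 3) → ℝ) (j : Fin (m + 3)) :
    ∏ i, delSign m lam j i = 1 := by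
  rw [Fin.prod_univ_castSucc, Fin.prod_univ_castSucc,
    Finset.prod_eq_one (f := fun i : Fin (m + 1) => delSign m lam j i.castSucc.castSucc)
      (fun i _ => if_pos i.isLt)]
  simp only [delSign, Fin.val_castSucc, Fin.val_last]
  split_ifs <;> simp <;> omega

/-! ### Elements of `Λ*` -/

section LamStar

variable {m : ℕ} {hk : 2 ≤ m + 2} {lam : Fin (m + 3) → ℝ}

lemma abs_last_pos (h : memLamStarD (m + 2) hk lam) : 0 < |lam (Fin.last _)| := h.2.2.1

lemma lam_strictAnti (h : memLamStarD (m + 2) hk lam) : StrictAnti lam := by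
  rw [Fin.strictAnti_iff_succ_lt]
  intro i
  by_cases hi : i.val + 1 < m + 2
  · exact h.1 i.castSucc hi
  · obtain rfl : i = Fin.last (m + 1) := Fin.ext (by simp; omega)
    exact lt_of_le_of_lt (le_abs_self _) h.2.1

lemma lam_pos (h : memLamStarD (m + 2) hk lam) (i : Fin (m + 3)) (hi : i.val < m + 2) :
    0 < lam i := by
  have h1 : 0 < lam ⟨m + 1, by omega⟩ := (abs_last_pos h).trans h.2.1
  exact h1.trans_le ((lam_strictAnti h).antitone (Fin.le_def.2 (by simp; omega)))

lemma lam_ne_zero (h : memLamStarD (m + 2) hk lam) (i : Fin (m + 3)) : lam i ≠ 0 := by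
  by_cases hi : i.val < m + 2
  · exact (lam_pos h i hi).ne'
  · have hi : i = Fin.last _ := Fin.ext (by simp; omega)
    subst hi
    exact abs_pos.1 (abs_last_pos h)

lemma abs_strictAnti (h : memLamStarD (m + 2) hk lam) : StrictAnti fun i => |lam i| := by
  rw [Fin.strictAnti_iff_succ_lt]
  intro i
  have hp : |lam i.castSucc| = lam i.castSucc := abs_of_pos (lam_pos h _ (by simp))
  simp only [hp]
  by_cases hi : i.val + 1 < m + 2
  · rw [abs_of_pos (lam_pos h _ (by simpa using hi))]
    exact lam_strictAnti h (Fin.castSucc_lt_succ)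
  · obtain rfl : i = Fin.last (m + 1) := Fin.ext (by simp; omega)
    exact h.2.1

/-- A signed entry of `λ` lies in the same coset of `ℤ` as `λ` itself. -/
lemma exists_coset (h : memLamStarD (m + 2) hk lam) : ∃ c : ℝ, (c = 0 ∨ c = 1 / 2) ∧
    ∀ i, ∀ e : ℝ, (e = 1 ∨ e = -1) → ∃ n : ℤ, e * lam i = n + c := by
  rcases h.2.2.2 with h | h
  · refine ⟨0, Or.inl rfl, ?_⟩
    rintro i e (rfl | rfl) <;> obtain ⟨n, hn⟩ := h i
    · exact ⟨n, by rw [hn]; ring⟩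
    · exact ⟨-n, by rw [hn]; push_cast; ring⟩
  · refine ⟨1 / 2, Or.inr rfl, ?_⟩
    rintro i e (rfl | rfl) <;> obtain ⟨n, hn⟩ := h i
    · exact ⟨n, by rw [hn]; ring⟩
    · exact ⟨-n - 1, by rw [hn]; push_cast; ring⟩

lemma abs_gap (h : memLamStarD (m + 2) hk lam) {i j : Fin (m + 3)} (hij : i < j) :
    |lam j| + 1 ≤ |lam i| := by
  obtain ⟨c, -, hc⟩ := exists_coset h
  have key : ∀ i, ∃ n : ℤ, |lam i| = n + c := by
    intro i
    rcases abs_choice (lam i) with h' | h'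
    · rw [h']; simpa using hc i 1 (Or.inl rfl)
    · rw [h']; simpa using hc i (-1) (Or.inr rfl)
  have hlt := abs_strictAnti h hij
  obtain ⟨a, ha⟩ := key i
  obtain ⟨b, hb⟩ := key j
  simp only [ha, hb] at hlt ⊢
  have : b < a := by exact_mod_cast (by linarith : (b : ℝ) < a)
  have : (b : ℝ) + 1 ≤ a := by exact_mod_cast this
  linarith

lemma nuD_eq (h : memLamStarD (m + 2) hk lam) (j : Fin (m + 3)) :
    nuD (m + 2) hk lam j = |lam j| := by
  unfold nuD
  split_ifs with hj
  · exact (abs_of_pos (lam_pos h j hj)).symm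
  · rw [show j = ⟨m + 2, by omega⟩ from Fin.ext (by simp; omega)]

/-- The tuple of `(σ_j, ν_j)` as an explicit point of the orbit of `λ`. -/
lemma tupD_sigmaD (h : memLamStarD (m + 2) hk lam) (j i : Fin (m + 3)) :
    tupD (m + 2) (sigmaD (m + 2) hk lam j) (nuD (m + 2) hk lam j) i =
      delSign m lam j i * lam (delPerm m j i) := by
  refine Fin.lastCases ?_ (fun i => ?_) i
  · rw [delPerm_last, nuD_eq h]
    simp only [tupD, delSign, Fin.val_last]
    rw [dif_neg (lt_irrefl _), if_neg (by omega)]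
    split_ifs with h3
    · rw [abs_of_pos h3]; ring
    · rw [abs_of_nonpos (not_lt.1 h3)]; ring
  · rw [delPerm_castSucc]
    simp only [tupD, delSign, Fin.val_castSucc, i.isLt, dif_pos, Fin.eta]
    by_cases hj : j.val < m + 2
    · have hp := lam_pos h j hj
      by_cases hi : i.val = m + 1
      · have hs : j.succAbove i = Fin.last _ := by
          rw [Fin.succAbove_of_le_castSucc _ _ (Fin.le_def.2 (by simp; omega))]
          exact Fin.ext (by simp; omega)
        rw [hs]
        simp only [sigmaD, hj, hi, hp, if_true]
        simp [Fin.last]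
        ring
      · by_cases hij : i.val < j.val
        · rw [Fin.succAbove_of_castSucc_lt _ _ (Fin.lt_def.2 (by simpa using hij))]
          simp only [sigmaD, hj, hp, if_true, hij, show m + 2 - 1 = m + 1 from rfl, hi, if_false]
          rw [show (⟨i.val, by omega⟩ : Fin (m + 3)) = i.castSucc from rfl]
          simp
          ring
        · rw [Fin.succAbove_of_le_castSucc _ _ (Fin.le_def.2 (by simpa using hij))]
          simp only [sigmaD, hj, hp, if_true, hij, show m + 2 - 1 = m + 1 from rfl, hi, if_false]
          rw [show (⟨i.val + 1, by omega⟩ : Fin (m + 3)) = i.succ from rfl]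
          simp
          ring
    · have hj' : j = Fin.last _ := Fin.ext (by simp; omega)
      subst hj'
      rw [Fin.succAbove_last]
      by_cases hi : i.val = m + 1
      · rw [show i = ⟨m + 1, by omega⟩ from Fin.ext hi]
        simp only [sigmaD, Fin.val_last, lt_irrefl, if_false]
        simp only [show m + 2 - 1 = m + 1 from rfl, if_true, Fin.castSucc_mk]
        simp only [Fin.last, gt_iff_lt]
        split_ifs <;> push_cast <;> ring
      · simp only [sigmaD, Fin.val_last, lt_irrefl, if_false]
        simp only [show m + 2 - 1 = m + 1 from rfl, hi, if_false,
          show i.val < m + 1 by omega, if_true]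
        rw [show (⟨i.val, by omega⟩ : Fin (m + 3)) = i.castSucc from rfl]
        push_cast
        ring

end LamStar

/-! ### Dominance in terms of the shifted tuple -/

lemma sigma_eq_tupD (k : ℕ) (σ : Fin k → ℝ) (ν : ℝ) (i : Fin k) :
    σ i = tupD k σ ν i.castSucc - ((k : ℝ) - 1 - i.val) := by
  simp [tupD]

lemma tupD_last (k : ℕ) (σ : Fin k → ℝ) (ν : ℝ) : tupD k σ ν (Fin.last k) = ν := by
  simp [tupD]

lemma tupD_inj (k : ℕ) {σ σ' : Fin k → ℝ} {ν ν' : ℝ} (h : ∀ i, tupD k σ ν i = tupD k σ' ν' i) :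
    σ = σ' ∧ ν = ν' := by
  refine ⟨funext fun i => ?_, ?_⟩
  · rw [sigma_eq_tupD k σ ν, sigma_eq_tupD k σ' ν', h]
  · rw [← tupD_last k σ ν, h, tupD_last]

/-- Dominance of `σ` in terms of the shifted tuple: the first
`m + 1` entries drop by at least `1` at each step, and the last of these exceeds the absolute value
of the next entry by at least `1`. -/
lemma domM_iff (m : ℕ) (hk : 2 ≤ m + 2) (σ : Fin (m + 2) → ℝ) (ν : ℝ) :
    domM (m + 2) hk σ ↔
      (∀ i : Fin (m + 3), ∀ h : i.val < m, tupD (m + 2) σ ν ⟨i.val + 1, by omega⟩ + 1 ≤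
        tupD (m + 2) σ ν i) ∧
      |tupD (m + 2) σ ν ⟨m + 1, by omega⟩| + 1 ≤ tupD (m + 2) σ ν ⟨m, by omega⟩ := by
  unfold domM
  refine and_congr ⟨fun H i h => ?_, fun H i h => ?_⟩ ?_
  · have := H ⟨i.val, by omega⟩ (by simp; omega)
    simp only [tupD, show i.val < m + 2 by omega, show i.val + 1 < m + 2 by omega, dif_pos]
    push_cast
    linarith
  · have := H i.castSucc (by simp; omega)
    simp only [tupD, Fin.val_castSucc, show i.val < m + 2 by omega,
      show i.val + 1 < m + 2 by omega, dif_pos] at this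
    push_cast at this
    simp only [Fin.eta] at this
    linarith
  · simp only [tupD, show m < m + 2 by omega, show m + 1 < m + 2 by omega, dif_pos]
    simp only [show m + 2 - 1 = m + 1 from rfl, show m + 2 - 2 = m from rfl]
    push_cast
    rw [show σ ⟨m + 1, by omega⟩ + ((m : ℝ) + 2) - 1 - (m + 1) = σ ⟨m + 1, by omega⟩ by ring]
    constructor <;> intro h <;> linarith

/-- The tuple of a dominant `σ` has strictly decreasing absolute values off `ν`, and all of these
entries but the last are positive. -/
lemma tupD_of_domM (m : ℕ) (hk : 2 ≤ m + 2) (σ : Fin (m + 2) → ℝ) (ν : ℝ)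
    (h : domM (m + 2) hk σ) :
    (StrictAnti fun i : Fin (m + 2) => |tupD (m + 2) σ ν i.castSucc|) ∧
      ∀ i : Fin (m + 3), i.val < m + 1 → 0 < tupD (m + 2) σ ν i := by
  rw [domM_iff m hk σ ν] at h
  obtain ⟨h1, h2⟩ := h
  have pos : ∀ d : ℕ, ∀ i : Fin (m + 3), i.val + d = m → 0 < tupD (m + 2) σ ν i := by
    intro d
    induction d with
    | zero =>
      intro i hi
      rw [show i = ⟨m, by omega⟩ from Fin.ext (by simpa using hi)]
      linarith [abs_nonneg (tupD (m + 2) σ ν ⟨m + 1, by omega⟩)]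
    | succ d ih =>
      intro i hi
      linarith [h1 i (by omega), ih ⟨i.val + 1, by omega⟩ (by simp; omega)]
  have pos' : ∀ i : Fin (m + 3), i.val < m + 1 → 0 < tupD (m + 2) σ ν i :=
    fun i hi => pos (m - i.val) i (by omega)
  refine ⟨?_, pos'⟩
  rw [Fin.strictAnti_iff_succ_lt]
  intro i
  rw [abs_of_pos (pos' i.castSucc.castSucc i.isLt)]
  by_cases hi : i.val < m
  · have := h1 i.castSucc.castSucc (by simpa using hi)
    rw [abs_of_pos (pos' i.succ.castSucc (by simpa using hi))]
    exact lt_of_lt_of_le (lt_add_one _) this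
  · obtain rfl : i = (Fin.last m) := Fin.ext (by simp; omega)
    exact lt_of_lt_of_le (lt_add_one _) h2

/-! ### Classification of the pairs -/

/-- Every admissible pair is some `(σ_j, ν_j)`. -/
lemma stmt13_forward {m : ℕ} {hk : 2 ≤ m + 2} {lam : Fin (m + 3) → ℝ}
    (h : memLamStarD (m + 2) hk lam) (σ : Fin (m + 2) → ℝ) (ν : ℝ)
    (hd : domM (m + 2) hk σ) (hν : 0 ≤ ν)
    (ho : evenSignedPermOrbit (m + 3) lam (tupD (m + 2) σ ν)) :
    ∃ j : Fin (m + 3), σ = sigmaD (m + 2) hk lam j ∧ ν = nuD (m + 2) hk lam j := by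
  obtain ⟨g, e, he, hprod, hτ⟩ := ho
  obtain ⟨hanti, hpos⟩ := tupD_of_domM m hk σ ν hd
  have habs : ∀ i, |tupD (m + 2) σ ν i| = |lam (g i)| := by
    intro i
    rw [hτ i, abs_mul]
    rcases he i with h' | h' <;> simp [h']
  have hg : StrictMono fun i : Fin (m + 2) => g i.castSucc := by
    intro a b hab
    have := hanti hab
    simp only [habs] at this
    exact (abs_strictAnti h).lt_iff_gt.1 this
  set j := g (Fin.last _) with hj
  have hgj : g = delPerm m j := eq_delPerm m g hg
  have hsmall : ∀ i : Fin (m + 3), i.val < m + 1 → e i = 1 := by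
    intro i hi
    have h1 := hpos i hi
    have h2 := lam_pos h _ (delPerm_castSucc_lt m j i hi)
    rw [hτ i, hgj] at h1
    rcases he i with h' | h'
    · exact h'
    · rw [h'] at h1; linarith
  have hlast : e (Fin.last _) = if 0 < lam j then 1 else -1 := by
    have h1 := hτ (Fin.last _)
    rw [tupD_last, ← hj] at h1
    have h2 := lam_ne_zero h j
    split_ifs with hp <;> rcases he (Fin.last _) with h' | h'
    · exact h'
    · rw [h'] at h1; linarith
    -- here `0 ≤ ν = λ j` and `λ j ≠ 0`, so `λ j` would be positive
    · rw [h'] at h1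
      exact absurd (lt_of_le_of_ne (by linarith) h2.symm) hp
    · exact h'
  have hpen : e (Fin.last (m + 1)).castSucc = e (Fin.last _) := by
    rw [Fin.prod_univ_castSucc, Fin.prod_univ_castSucc,
      Finset.prod_eq_one (fun i _ => hsmall _ i.isLt), one_mul] at hprod
    rcases he (Fin.last (m + 1)).castSucc with h1 | h1 <;>
      rcases he (Fin.last (m + 2)) with h2 | h2 <;> rw [h1, h2] at hprod ⊢ <;> norm_num at hprod
  refine ⟨j, tupD_inj _ fun i => ?_⟩
  rw [tupD_sigmaD h, hτ i, ← hgj]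
  congr 1
  unfold delSign
  split_ifs with hi hp
  · exact hsmall i hi
  all_goals
    have : i = (Fin.last (m + 1)).castSucc ∨ i = Fin.last _ := by
      rcases (show i.val = m + 1 ∨ i.val = m + 2 by omega) with h' | h'
      · exact Or.inl (Fin.ext (by simpa using h'))
      · exact Or.inr (Fin.ext (by simpa using h'))
    rcases this with rfl | rfl <;> simp [hpen, hlast, hp]

/-- Every `(σ_j, ν_j)` is admissible. -/
lemma stmt13_backward {m : ℕ} {hk : 2 ≤ m + 2} {lam : Fin (m + 3) → ℝ}
    (h : memLamStarD (m + 2) hk lam) (j : Fin (m + 3)) :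
    domM (m + 2) hk (sigmaD (m + 2) hk lam j) ∧
      ((∀ i, ∃ n : ℤ, sigmaD (m + 2) hk lam j i = n) ∨
        (∀ i, ∃ n : ℤ, sigmaD (m + 2) hk lam j i = n + 1/2)) ∧
      0 ≤ nuD (m + 2) hk lam j ∧
      evenSignedPermOrbit (m + 3) lam
        (tupD (m + 2) (sigmaD (m + 2) hk lam j) (nuD (m + 2) hk lam j)) := by
  refine ⟨?_, ?_, ?_, delPerm m j, delSign m lam j, delSign_eq_or m lam j, prod_delSign m lam j,
    tupD_sigmaD h j⟩
  · rw [domM_iff m hk _ (nuD (m + 2) hk lam j)]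
    have habs : ∀ i, |tupD (m + 2) (sigmaD (m + 2) hk lam j) (nuD (m + 2) hk lam j) i| =
        |lam (delPerm m j i)| := by
      intro i
      rw [tupD_sigmaD h, abs_mul]
      rcases delSign_eq_or m lam j i with h' | h' <;> simp [h']
    have hsmall : ∀ i : Fin (m + 3), i.val < m + 1 →
        tupD (m + 2) (sigmaD (m + 2) hk lam j) (nuD (m + 2) hk lam j) i =
          |lam (delPerm m j i)| := by
      intro i hi
      rw [tupD_sigmaD h, abs_of_pos (lam_pos h _ (delPerm_castSucc_lt m j i hi)), delSign,
        if_pos hi, one_mul]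
    have hmono : ∀ a b : Fin (m + 3), a.val < b.val → b.val < m + 2 →
        delPerm m j a < delPerm m j b := fun a b hab hb =>
      delPerm_strictMono m j (a := ⟨a.val, by omega⟩) (b := ⟨b.val, hb⟩) hab
    refine ⟨fun i hi => ?_, ?_⟩
    · rw [hsmall _ (by simpa using hi), hsmall i (by omega)]
      exact abs_gap h (hmono _ _ (by simp) (by simp; omega))
    · rw [habs, hsmall _ (by simp)]
      exact abs_gap h (hmono _ _ (by simp) (by simp))
  · obtain ⟨c, hc, hcos⟩ := exists_coset h
    have key : ∀ i, ∃ n : ℤ, sigmaD (m + 2) hk lam j i = n + c := by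
      intro i
      obtain ⟨n, hn⟩ := hcos (delPerm m j i.castSucc) _ (delSign_eq_or m lam j i.castSucc)
      refine ⟨n - (m + 1 - i.val), ?_⟩
      rw [sigma_eq_tupD (m + 2) (sigmaD (m + 2) hk lam j) (nuD (m + 2) hk lam j) i, tupD_sigmaD h, hn]
      push_cast
      ring
    rcases hc with rfl | rfl
    · exact Or.inl (by simpa using key)
    · exact Or.inr key
  · rw [nuD_eq h]; exact abs_nonneg _

/-- for λ ∈ Λ* there are exactly k+1 pairs (σ,ν) with σ a dominant
Spin(2k) weight (all coordinates in ℤ or all in ½+ℤ) and ν ≥ 0 such that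
(n₁+k-1,...,n_{k-1}+1,n_k,ν) lies in the even-signed-permutation orbit of λ;
they are the pairs (σ_j, ν_j), j = 1, ..., k+1, which are mutually distinct. -/
theorem stmt13 (k : ℕ) (hk : 2 ≤ k) (lam : Fin (k + 1) → ℝ)
    (hlam : memLamStarD k hk lam) :
    (∀ (σ : Fin k → ℝ) (ν : ℝ),
      (domM k hk σ ∧
        ((∀ i, ∃ m : ℤ, σ i = m) ∨ (∀ i, ∃ m : ℤ, σ i = m + 1/2)) ∧
        0 ≤ ν ∧
        evenSignedPermOrbit (k + 1) lam (tupD k σ ν))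
      ↔ ∃ j : Fin (k + 1), σ = sigmaD k hk lam j ∧ ν = nuD k hk lam j) ∧
    Function.Injective (fun j : Fin (k + 1) => (sigmaD k hk lam j, nuD k hk lam j)) := by
  obtain ⟨m, rfl⟩ := Nat.exists_eq_add_of_le' hk
  refine ⟨fun σ ν => ⟨?_, ?_⟩, fun i j hij => ?_⟩
  · rintro ⟨hd, -, hν, ho⟩
    exact stmt13_forward hlam σ ν hd hν ho
  · rintro ⟨j, rfl, rfl⟩
    exact stmt13_backward hlam j
  · have := congrArg Prod.snd hij
    simp only [nuD_eq hlam] at this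
    exact (abs_strictAnti hlam).injective this
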